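/- (Eigenpairs of the VCS Jacobian from the flexible-load quadratic) Let E>0, g_l>0, n_F ≥ 2, n_I ≥ 0, a>0, b>0, κ_i>0 for i ∈ F, demands P_{0,i}, and g ∈ ℝⁿ_{≥0} with ḡ = Σᵢ gᵢ and v = E·g_l/(ḡ+g_l). Let λ ∈ ℝ be any root of λ² + (a + b + v²)·λ + a·v² = 0 (this quadratic has two distinct real roots since its discriminant equals (a−v²)² + b² + 2ab + 2bv² > 0, and neither root equals −a). Then for any two distinct flexible indices i, j ∈ F, the nonzero vector u = (u_F, u_I, u_φ, û) with u_F = e_i − e_j, u_I = 0, u_φ = 0, û = (a/(λ+a))·(e_i − e_j) satisfies J_SC(g)·u = λ·u; i.e., each root of the quadratic is an eigenvalue of J_SC(g) with the stated eigenvector. -/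

import Mathlib

/-- The VCS Jacobian `J_SC(g)` as a matrix on the index type
`(Fin nF ⊕ Fin nI) ⊕ (Unit ⊕ Fin nF)`: the first block indexes the load conductances
(flexible then inflexible), `Unit` indexes the shared state `φ`, and the last block the
controller states `ĝ`. Here `ḡ = Σⱼ gⱼ`, `v = E·g_l/(ḡ+g_l)`, `ΔP̄ = v²·ḡ − Σⱼ P₀ⱼ`, and
`c = (v²·(g_l−ḡ)/(ḡ+g_l))² + ΔP̄·2v²·(ḡ−2g_l)/(ḡ+g_l)²`. -/
noncomputable def JSC (E gl a b : ℝ) {nF nI : ℕ}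
    (P0 : Fin nF ⊕ Fin nI → ℝ) (κ : Fin nF → ℝ) (g : Fin nF ⊕ Fin nI → ℝ) :
    Matrix ((Fin nF ⊕ Fin nI) ⊕ (Unit ⊕ Fin nF))
           ((Fin nF ⊕ Fin nI) ⊕ (Unit ⊕ Fin nF)) ℝ :=
  let gbar : ℝ := ∑ j, g j
  let v : ℝ := E * gl / (gbar + gl)
  let c : ℝ := (v ^ 2 * (gl - gbar) / (gbar + gl)) ^ 2 +
    (v ^ 2 * gbar - ∑ j, P0 j) * (2 * v ^ 2 * (gbar - 2 * gl) / (gbar + gl) ^ 2)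
  fun p q =>
    match p, q with
    | Sum.inl i, Sum.inl j =>
        (2 * v ^ 2 / (gbar + gl)) * g i +
          (match i, j with
           | Sum.inl i', Sum.inl j' => if i' = j' then -(v ^ 2 + b) else 0
           | Sum.inr i', Sum.inr j' => if i' = j' then -(v ^ 2) else 0
           | _, _ => 0)
    | Sum.inl (Sum.inl i'), Sum.inr (Sum.inl _) => -κ i'
    | Sum.inl (Sum.inr _), Sum.inr (Sum.inl _) => 0
    | Sum.inl (Sum.inl i'), Sum.inr (Sum.inr j') => if i' = j' then b else 0
    | Sum.inl (Sum.inr _), Sum.inr (Sum.inr _) => 0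
    | Sum.inr (Sum.inl _), Sum.inl _ => c
    | Sum.inr (Sum.inl _), Sum.inr _ => 0
    | Sum.inr (Sum.inr i'), Sum.inl (Sum.inl j') => if i' = j' then a else 0
    | Sum.inr (Sum.inr _), Sum.inl (Sum.inr _) => 0
    | Sum.inr (Sum.inr i'), Sum.inr (Sum.inr j') => if i' = j' then -a else 0
    | Sum.inr (Sum.inr _), Sum.inr (Sum.inl _) => 0

/-!
A conductance perturbation `u` couples the loads and the shared state only through its total `ū`.
On a flexible perturbation `d` with `∑ d = 0` all coupling therefore disappears, and `J_SC(g)` acts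
on the pair `(u_F, û) = (x₀ d, x₁ d)` as the `2 × 2` matrix `[[-(v² + b), b], [a, -a]]` acts on
`(x₀, x₁)`. The quadratic is the characteristic polynomial of this matrix, and `(1, a / (λ + a))` is
its eigenvector for the root `λ`.
-/

open Matrix

section SingleLoad

variable {K : Type*}

/-- The Jacobian of a single flexible load and its controller when the total conductance is held
fixed: the first coordinate is the load conductance, the second the controller state, and `w`
stands for the squared voltage `v²`. -/
def flexibleLoadMatrix [Ring K] (a b w : K) : Matrix (Fin 2) (Fin 2) K :=
  !![-(w + b), b; a, -a]

theorem flexibleLoadMatrix_mulVec [Ring K] (a b w : K) (x : Fin 2 → K) :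
    flexibleLoadMatrix a b w *ᵥ x = ![-(w + b) * x 0 + b * x 1, a * (x 0 - x 1)] := by
  ext k
  fin_cases k <;>
    simp [flexibleLoadMatrix, mulVec, dotProduct, Fin.sum_univ_two, mul_add, sub_eq_add_neg]

theorem flexibleLoad_discrim_pos [CommRing K] [LinearOrder K] [IsStrictOrderedRing K] {a b w : K}
    (ha : 0 ≤ a) (hb : 0 < b) (hw : 0 ≤ w) : 0 < (a + b + w) ^ 2 - 4 * a * w :=
  calc
    0 < (a - w) ^ 2 + b * (b + 2 * a + 2 * w) := by positivity
    _ = (a + b + w) ^ 2 - 4 * a * w := by ring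

theorem flexibleLoad_root_ne_neg [CommRing K] [NoZeroDivisors K] {a b w lam : K}
    (ha : a ≠ 0) (hb : b ≠ 0) (hlam : lam ^ 2 + (a + b + w) * lam + a * w = 0) : lam ≠ -a := by
  rintro rfl
  have hab : a * b = 0 := by linear_combination -hlam
  exact mul_ne_zero ha hb hab

theorem flexibleLoadMatrix_mulVec_of_root [Field K] {a b w lam : K} (hne : lam ≠ -a)
    (hlam : lam ^ 2 + (a + b + w) * lam + a * w = 0) :
    flexibleLoadMatrix a b w *ᵥ ![1, a / (lam + a)] = lam • ![1, a / (lam + a)] := by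
  have hla : lam + a ≠ 0 := fun h => hne (eq_neg_of_add_eq_zero_left h)
  have load_row : -(w + b) * 1 + b * (a / (lam + a)) = lam * 1 := by
    field_simp
    linear_combination -hlam
  have controller_row : a * (1 - a / (lam + a)) = lam * (a / (lam + a)) := by
    field_simp
    ring
  rw [flexibleLoadMatrix_mulVec, smul_vec2]
  exact congrArg₂ (![·, ·]) load_row controller_row

end SingleLoad

section Network

variable {nF nI : ℕ}

/-- The load voltage `v = E·g_l/(ḡ + g_l)`. -/
noncomputable def loadVoltage (E gl : ℝ) (g : Fin nF ⊕ Fin nI → ℝ) : ℝ :=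
  E * gl / ((∑ j, g j) + gl)

/-- The coefficient `c` of `ū` in the `φ`-row of the Jacobian. -/
noncomputable def sharedStateGain (E gl : ℝ) (P0 g : Fin nF ⊕ Fin nI → ℝ) : ℝ :=
  let gbar := ∑ j, g j
  let v := loadVoltage E gl g
  (v ^ 2 * (gl - gbar) / (gbar + gl)) ^ 2 +
    (v ^ 2 * gbar - ∑ j, P0 j) * (2 * v ^ 2 * (gbar - 2 * gl) / (gbar + gl) ^ 2)

theorem JSC_mulVec (E gl a b : ℝ) (P0 : Fin nF ⊕ Fin nI → ℝ) (κ : Fin nF → ℝ)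
    (g : Fin nF ⊕ Fin nI → ℝ) (uF : Fin nF → ℝ) (uI : Fin nI → ℝ) (uφ : Unit → ℝ)
    (uhat : Fin nF → ℝ) :
    JSC E gl a b P0 κ g *ᵥ Sum.elim (Sum.elim uF uI) (Sum.elim uφ uhat) =
      let v := loadVoltage E gl g
      let r := 2 * v ^ 2 / ((∑ j, g j) + gl)
      let ubar := ∑ k, uF k + ∑ k, uI k
      Sum.elim
        (Sum.elim
          (fun k => r * g (.inl k) * ubar - (v ^ 2 + b) * uF k - κ k * uφ () + b * uhat k)
          (fun k => r * g (.inr k) * ubar - v ^ 2 * uI k))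
        (Sum.elim (fun _ => sharedStateGain E gl P0 g * ubar) (a • (uF - uhat))) := by
  funext p
  rcases p with (k | k) | (k | k) <;>
    simp only [mulVec, dotProduct, JSC, loadVoltage, sharedStateGain, Fintype.sum_sum_type,
      Sum.elim_inl, Sum.elim_inr, add_mul, Finset.sum_add_distrib, ← Finset.mul_sum, ite_mul,
      zero_mul, Finset.sum_ite_eq, Finset.mem_univ, if_true, Finset.sum_const_zero,
      Finset.univ_unique, PUnit.default_eq_unit, Finset.sum_singleton, Pi.smul_apply,
      Pi.sub_apply, smul_eq_mul] <;>
    ring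

/-- The state in which the flexible conductances are perturbed by `x 0 • d`, their controllers by
`x 1 • d`, and the inflexible loads and the shared state are unperturbed. -/
def flexibleMode (nI : ℕ) (d : Fin nF → ℝ) (x : Fin 2 → ℝ) :
    (Fin nF ⊕ Fin nI) ⊕ (Unit ⊕ Fin nF) → ℝ :=
  Sum.elim (Sum.elim (x 0 • d) 0) (Sum.elim 0 (x 1 • d))

theorem flexibleMode_smul (d : Fin nF → ℝ) (t : ℝ) (x : Fin 2 → ℝ) :
    flexibleMode nI d (t • x) = t • flexibleMode nI d x := by
  funext p
  rcases p with (k | k) | (k | k) <;> simp [flexibleMode, mul_assoc]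

theorem flexibleMode_ne_zero {d : Fin nF → ℝ} {x : Fin 2 → ℝ} (hd : d ≠ 0) (hx : x 0 ≠ 0) :
    flexibleMode nI d x ≠ 0 := fun h =>
  smul_ne_zero hx hd (funext fun k => congrFun h (.inl (.inl k)))

theorem JSC_mulVec_flexibleMode (E gl a b : ℝ) (P0 : Fin nF ⊕ Fin nI → ℝ) (κ : Fin nF → ℝ)
    (g : Fin nF ⊕ Fin nI → ℝ) {d : Fin nF → ℝ} (hd : ∑ k, d k = 0) (x : Fin 2 → ℝ) :
    JSC E gl a b P0 κ g *ᵥ flexibleMode nI d x =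
      flexibleMode nI d (flexibleLoadMatrix a b (loadVoltage E gl g ^ 2) *ᵥ x) := by
  have hubar : ∑ k, (x 0 • d) k + ∑ k, (0 : Fin nI → ℝ) k = 0 := by
    simp [← Finset.mul_sum, hd]
  rw [flexibleLoadMatrix_mulVec, flexibleMode, JSC_mulVec]
  simp only [hubar]
  funext p
  rcases p with (k | k) | (k | k) <;>
    simp only [flexibleMode, Sum.elim_inl, Sum.elim_inr, Pi.smul_apply, Pi.sub_apply,
      Pi.zero_apply, smul_eq_mul, cons_val_zero, cons_val_one] <;>
    ring

theorem stmt_12_general {E gl a b : ℝ} (ha : 0 < a) (hb : 0 < b)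
    (P0 : Fin nF ⊕ Fin nI → ℝ) (κ : Fin nF → ℝ)
    {g : Fin nF ⊕ Fin nI → ℝ} (_hg : (∑ j, g j) + gl ≠ 0) {lam : ℝ}
    (hlam : lam ^ 2 + (a + b + loadVoltage E gl g ^ 2) * lam + a * loadVoltage E gl g ^ 2 = 0)
    {d : Fin nF → ℝ} (hd : d ≠ 0) (hsum : ∑ k, d k = 0) :
    0 < (a + b + loadVoltage E gl g ^ 2) ^ 2 - 4 * a * loadVoltage E gl g ^ 2 ∧
    lam ≠ -a ∧
    flexibleMode nI d ![1, a / (lam + a)] ≠ 0 ∧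
    JSC E gl a b P0 κ g *ᵥ flexibleMode nI d ![1, a / (lam + a)] =
      lam • flexibleMode nI d ![1, a / (lam + a)] := by
  have hne : lam ≠ -a := flexibleLoad_root_ne_neg ha.ne' hb.ne' hlam
  refine ⟨flexibleLoad_discrim_pos ha.le hb (sq_nonneg _), hne,
    flexibleMode_ne_zero hd one_ne_zero, ?_⟩
  rw [JSC_mulVec_flexibleMode E gl a b P0 κ g hsum, flexibleLoadMatrix_mulVec_of_root hne hlam,
    flexibleMode_smul]

end Network

/-- Eigenpairs of the VCS Jacobian from the flexible-load quadratic: any root `λ` of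
`λ² + (a+b+v²)·λ + a·v² = 0` (which has two distinct real roots, since its discriminant is
positive, neither equal to `−a`) is an eigenvalue of `J_SC(g)` with eigenvector
`u = (eᵢ − eⱼ, 0, 0, (a/(λ+a))·(eᵢ − eⱼ))` for any distinct flexible indices `i ≠ j`. -/
theorem stmt_12 (E gl a b : ℝ) (hE : 0 < E) (hgl : 0 < gl) (ha : 0 < a) (hb : 0 < b)
    (nF nI : ℕ) (hnF : 2 ≤ nF)
    (P0 : Fin nF ⊕ Fin nI → ℝ)
    (κ : Fin nF → ℝ) (hκ : ∀ i, 0 < κ i)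
    (g : Fin nF ⊕ Fin nI → ℝ) (hg : ∀ i, 0 ≤ g i)
    (lam : ℝ)
    (hlam : lam ^ 2 + (a + b + (E * gl / ((∑ j, g j) + gl)) ^ 2) * lam +
      a * (E * gl / ((∑ j, g j) + gl)) ^ 2 = 0)
    (i j : Fin nF) (hij : i ≠ j) :
    0 < (a + b + (E * gl / ((∑ j, g j) + gl)) ^ 2) ^ 2 -
        4 * a * (E * gl / ((∑ j, g j) + gl)) ^ 2 ∧
    lam ≠ -a ∧
    (∀ u : ((Fin nF ⊕ Fin nI) ⊕ (Unit ⊕ Fin nF)) → ℝ,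
      u = Sum.elim (Sum.elim (Pi.single i 1 - Pi.single j 1) (0 : Fin nI → ℝ))
            (Sum.elim (0 : Unit → ℝ) ((a / (lam + a)) • (Pi.single i 1 - Pi.single j 1))) →
      u ≠ 0 ∧ (JSC E gl a b P0 κ g).mulVec u = lam • u) := by
  have hden : 0 < (∑ k, g k) + gl := add_pos_of_nonneg_of_pos (Fintype.sum_nonneg hg) hgl
  have hne : (Pi.single i 1 - Pi.single j 1 : Fin nF → ℝ) ≠ 0 :=
    sub_ne_zero.mpr fun h => by simpa [hij] using congrFun h i
  have hsum : ∑ k, (Pi.single i 1 - Pi.single j 1 : Fin nF → ℝ) k = 0 := by simp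
  simpa [flexibleMode, loadVoltage] using stmt_12_general ha hb P0 κ hden.ne' hlam hne hsum
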